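/- Let n, d₁, d₂ ≥ 1, M₁ ∈ ℝ, and M₂ < −d₂. Let a : ℝⁿ × ℝ^{d₁} × ℝ^{d₂} → ℂ be smooth and satisfy, for all multi-indices α, β, γ, |∂_x^γ ∂_{ξ′}^α ∂_{ξ″}^β a(x,ξ′,ξ″)| ≤ C_{α,β,γ} ⟨(ξ′,ξ″)⟩^{M₁−|α|} ⟨ξ″⟩^{M₂−|β|} for all arguments, where ⟨·⟩ := (1+|·|²)^{1/2}, and let ψ ∈ C_c^∞(ℝ^{d₂}). Define b(x,ξ′) := ∫_{ℝ^{d₂}} a(x,ξ′,ξ″) ψ(⟨ξ′⟩^{−1/2} ξ″) dξ″. Then for all multi-indices α, γ there is C′ with |∂_x^γ ∂_{ξ′}^α b(x,ξ′)| ≤ C′ ⟨ξ′⟩^{M₁ − |α|/2} for all (x,ξ′). -/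

import Mathlib

open MeasureTheory

/-- The Japanese bracket `⟨v⟩ = (1 + |v|²)^{1/2}`. -/
noncomputable def jap {d : ℕ} (v : EuclideanSpace ℝ (Fin d)) : ℝ :=
  Real.sqrt (1 + ‖v‖ ^ 2)

/-- The Japanese bracket of a pair. -/
noncomputable def jap2 {d e : ℕ} (u : EuclideanSpace ℝ (Fin d))
    (v : EuclideanSpace ℝ (Fin e)) : ℝ :=
  Real.sqrt (1 + ‖u‖ ^ 2 + ‖v‖ ^ 2)


open scoped ContDiff Topology
open Filter

section nested

set_option linter.unusedSectionVars false

variable {X V W E F G : Type} [NormedAddCommGroup X] [NormedSpace ℝ X]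
  [NormedAddCommGroup V] [NormedSpace ℝ V] [NormedAddCommGroup W] [NormedSpace ℝ W]
  [NormedAddCommGroup E] [NormedSpace ℝ E] [NormedAddCommGroup F] [NormedSpace ℝ F]
  [NormedAddCommGroup G] [NormedSpace ℝ G]

/-- Nested iterated derivatives. -/
noncomputable def nest (γ α : ℕ) (f : X → V → E) (x : X) (ξ : V) :=
  iteratedFDeriv ℝ γ (fun x => iteratedFDeriv ℝ α (f x) ξ) x

lemma nest_zero (γ : ℕ) (f : X → V → E) (x : X) (ξ : V) :
    ‖nest γ 0 f x ξ‖ = ‖iteratedFDeriv ℝ γ (fun x => f x ξ) x‖ :=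
  LinearIsometryEquiv.norm_iteratedFDeriv_comp_left
    (continuousMultilinearCurryFin0 ℝ V E).symm (fun x => f x ξ) x γ

lemma nest_succ (γ α : ℕ) (f : X → V → E) (x : X) (ξ : V) :
    ‖nest γ (α + 1) f x ξ‖ = ‖nest γ α (fun x ξ => fderiv ℝ (f x) ξ) x ξ‖ := by
  unfold nest
  rw [← LinearIsometryEquiv.norm_iteratedFDeriv_comp_left
    (continuousMultilinearCurryRightEquiv' ℝ α V E).symm
    (fun x => iteratedFDeriv ℝ α (fun ξ => fderiv ℝ (f x) ξ) ξ) x γ]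
  congr 2
  funext x
  exact iteratedFDeriv_succ_eq_comp_right

lemma contDiff_fderiv_snd {f : X → V → E} (hf : ContDiff ℝ ∞ (fun p : X × V => f p.1 p.2)) :
    ContDiff ℝ ∞ (fun p : X × V => fderiv ℝ (f p.1) p.2) := by
  refine ContDiff.fderiv (m := ∞) (f := fun (p : X × V) => f p.1) (g := fun p => p.2) ?_
    contDiff_snd (by simp)
  exact hf.comp (f := fun q : (X × V) × V => (q.1.1, q.2)) (by fun_prop)

lemma contDiff_iter_snd (α : ℕ) {E : Type} [NormedAddCommGroup E] [NormedSpace ℝ E]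
    {f : X → V → E} (hf : ContDiff ℝ ∞ (fun p : X × V => f p.1 p.2)) :
    ContDiff ℝ ∞ (fun p : X × V => iteratedFDeriv ℝ α (f p.1) p.2) := by
  induction α generalizing E with
  | zero => exact (continuousMultilinearCurryFin0 ℝ V E).symm.contDiff.comp hf
  | succ α ih =>
    have := (continuousMultilinearCurryRightEquiv' ℝ α V E).symm.contDiff.comp
      (ih (f := fun x ξ => fderiv ℝ (f x) ξ) (contDiff_fderiv_snd hf))
    convert this using 2
    exact iteratedFDeriv_succ_eq_comp_right

lemma contDiff_slice_left {f : X → V → E} (hf : ContDiff ℝ ∞ (fun p : X × V => f p.1 p.2))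
    (ξ : V) : ContDiff ℝ ∞ (fun x => f x ξ) :=
  hf.comp (f := fun x : X => (x, ξ)) (by fun_prop)

lemma contDiff_slice_right {f : X → V → E} (hf : ContDiff ℝ ∞ (fun p : X × V => f p.1 p.2))
    (x : X) : ContDiff ℝ ∞ (fun ξ => f x ξ) :=
  hf.comp (f := fun ξ : V => (x, ξ)) (by fun_prop)

lemma nest_add (γ α : ℕ) {f g : X → V → E} (hf : ContDiff ℝ ∞ (fun p : X × V => f p.1 p.2))
    (hg : ContDiff ℝ ∞ (fun p : X × V => g p.1 p.2)) (x : X) (ξ : V) :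
    nest γ α (fun x ξ => f x ξ + g x ξ) x ξ = nest γ α f x ξ + nest γ α g x ξ := by
  unfold nest
  rw [← iteratedFDeriv_add_apply]
  · congr 1
    funext x
    exact iteratedFDeriv_add_apply
      ((contDiff_slice_right hf x).of_le (by exact_mod_cast le_top)).contDiffAt
      ((contDiff_slice_right hg x).of_le (by exact_mod_cast le_top)).contDiffAt
  · exact ((contDiff_slice_left (f := fun x ξ => iteratedFDeriv ℝ α (f x) ξ)
      (contDiff_iter_snd α hf) ξ).of_le (by exact_mod_cast le_top)).contDiffAt
  · exact ((contDiff_slice_left (f := fun x ξ => iteratedFDeriv ℝ α (g x) ξ)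
      (contDiff_iter_snd α hg) ξ).of_le (by exact_mod_cast le_top)).contDiffAt

lemma nest_bilin (γ α : ℕ) {E F G : Type} [NormedAddCommGroup E] [NormedSpace ℝ E]
    [NormedAddCommGroup F] [NormedSpace ℝ F] [NormedAddCommGroup G] [NormedSpace ℝ G]
    (L : E →L[ℝ] F →L[ℝ] G) {a : X → V → E} {g : V → F}
    (ha : ContDiff ℝ ∞ (fun p : X × V => a p.1 p.2)) (hg : ContDiff ℝ ∞ g) (x : X) (ξ : V)
    {A B t : ℝ} (hA : 0 ≤ A) (hB : 0 ≤ B) (ht : 0 ≤ t)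
    (h1 : ∀ i ≤ α, ‖nest γ i a x ξ‖ ≤ A * t ^ i)
    (h2 : ∀ i ≤ α, ‖iteratedFDeriv ℝ i g ξ‖ ≤ B * t ^ i) :
    ‖nest γ α (fun x ξ => L (a x ξ) (g ξ)) x ξ‖ ≤ ‖L‖ * 2 ^ α * (A * B * t ^ α) := by
  induction α generalizing E F G A B with
  | zero =>
    rw [nest_zero]
    have e : (fun x => L (a x ξ) (g ξ)) = (L.flip (g ξ)) ∘ (fun x => a x ξ) := by
      funext x; simp
    rw [e]
    refine (ContinuousLinearMap.norm_iteratedFDeriv_comp_left _ (N := ∞)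
      (contDiff_slice_left ha ξ).contDiffAt (by exact_mod_cast le_top)).trans ?_
    have h1' := h1 0 le_rfl
    have h2' := h2 0 le_rfl
    rw [nest_zero] at h1'
    simp only [norm_iteratedFDeriv_zero, pow_zero, mul_one] at h1' h2' ⊢
    have : ‖L.flip (g ξ)‖ ≤ ‖L‖ * B := by
      refine (L.flip.le_opNorm _).trans ?_
      rw [ContinuousLinearMap.opNorm_flip]
      gcongr
    calc _ ≤ (‖L‖ * B) * A := by gcongr
      _ = _ := by ring
  | succ α ih =>
    rw [nest_succ]
    have e : (fun (x : X) (ξ : V) => fderiv ℝ (fun ξ => L (a x ξ) (g ξ)) ξ) = fun x ξ =>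
        L.precompR V (a x ξ) (fderiv ℝ g ξ) + L.precompL V (fderiv ℝ (a x) ξ) (g ξ) := by
      funext x ξ
      exact L.fderiv_of_bilinear
        ((contDiff_slice_right ha x).differentiable (by simp)).differentiableAt
        (hg.differentiable (by simp)).differentiableAt
    have hg' : ContDiff ℝ ∞ (fderiv ℝ g) := hg.fderiv_right (m := ∞) (by simp)
    have ha' := contDiff_fderiv_snd ha
    rw [e, nest_add]
    · have i1 := ih (L.precompR V) ha hg' hA (B := B * t) (by positivity)
        (fun i hi => h1 i (by omega)) (fun i hi => by
          rw [norm_iteratedFDeriv_fderiv]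
          refine (h2 (i + 1) (by omega)).trans_eq ?_
          ring)
      have i2 := ih (L.precompL V) ha' hg (A := A * t) (by positivity) hB
        (fun i hi => by
          rw [← nest_succ]
          refine (h1 (i + 1) (by omega)).trans_eq ?_
          ring) (fun i hi => h2 i (by omega))
      have n1 := L.norm_precompR_le V
      have n2 := L.norm_precompL_le V
      refine (norm_add_le _ _).trans ((add_le_add i1 i2).trans ?_)
      calc _ ≤ ‖L‖ * 2 ^ α * (A * (B * t) * t ^ α) + ‖L‖ * 2 ^ α * (A * t * B * t ^ α) := by
            gcongr
        _ = _ := by ring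
    · exact ((L.precompR V).contDiff.comp ha).clm_apply (hg'.comp contDiff_snd)
    · exact ((L.precompL V).contDiff.comp ha').clm_apply (hg.comp contDiff_snd)

lemma nest_clm (γ α : ℕ) {E F : Type} [NormedAddCommGroup E] [NormedSpace ℝ E]
    [NormedAddCommGroup F] [NormedSpace ℝ F] (T : E →L[ℝ] F) {f : X → V → E}
    (hf : ContDiff ℝ ∞ (fun p : X × V => f p.1 p.2)) (x : X) (ξ : V) :
    ‖nest γ α (fun x ξ => T (f x ξ)) x ξ‖ ≤ ‖T‖ * ‖nest γ α f x ξ‖ := by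
  induction α generalizing E F with
  | zero =>
    rw [nest_zero, nest_zero]
    exact T.norm_iteratedFDeriv_comp_left (f := fun x => f x ξ) (N := ∞)
      (contDiff_slice_left hf ξ).contDiffAt (by exact_mod_cast le_top)
  | succ α ih =>
    rw [nest_succ, nest_succ]
    have e : (fun (x : X) (ξ : V) => fderiv ℝ (fun ξ => T (f x ξ)) ξ) = fun x ξ =>
        ContinuousLinearMap.compL ℝ V E F T (fderiv ℝ (f x) ξ) := by
      funext x ξ
      exact (T.hasFDerivAt.comp ξ ((contDiff_slice_right hf x).differentiable
        (by simp)).differentiableAt.hasFDerivAt).fderiv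
    rw [e]
    refine (ih (ContinuousLinearMap.compL ℝ V E F T) (contDiff_fderiv_snd hf)).trans ?_
    gcongr
    refine (ContinuousLinearMap.le_opNorm _ _).trans ?_
    exact mul_le_of_le_one_left (norm_nonneg _) (ContinuousLinearMap.norm_compL_le ℝ V E F)

/-- local uniform compact support in the last variable -/
def LocSupp (f : V → W → E) : Prop :=
  ∀ ξ₀ : V, ∃ K : Set W, IsCompact K ∧ ∀ᶠ ξ in 𝓝 ξ₀, ∀ w ∉ K, f ξ w = 0

lemma LocSupp.fderiv {f : V → W → E} (h : LocSupp f) :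
    LocSupp (fun ξ w => fderiv ℝ (fun ξ => f ξ w) ξ) := by
  intro ξ₀
  obtain ⟨K, hK, h⟩ := h ξ₀
  refine ⟨K, hK, h.eventually_nhds.mono fun ξ hξ w hw => ?_⟩
  have : (fun ξ => f ξ w) =ᶠ[𝓝 ξ] fun _ => 0 := hξ.mono fun y hy => hy w hw
  simpa using this.fderiv_eq (𝕜 := ℝ)

variable [MeasurableSpace W] [BorelSpace W] [SecondCountableTopology W]

lemma fderiv_int [ProperSpace V] (μ : Measure W) [IsFiniteMeasureOnCompacts μ]
    {f : V → W → E} (hf : ContDiff ℝ ∞ (fun p : V × W => f p.1 p.2)) (hs : LocSupp f) (ξ : V) :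
    fderiv ℝ (fun ξ => ∫ w, f ξ w ∂μ) ξ = ∫ w, fderiv ℝ (fun ξ => f ξ w) ξ ∂μ := by
  apply HasFDerivAt.fderiv
  have hf' : ContDiff ℝ ∞ (fun p : W × V => f p.2 p.1) :=
    hf.comp (f := fun p : W × V => (p.2, p.1)) (by fun_prop)
  have hd : Continuous (fun p : W × V => fderiv ℝ (fun ξ => f ξ p.1) p.2) :=
    (contDiff_fderiv_snd (f := fun w ξ => f ξ w) hf').continuous
  obtain ⟨K, hK, hKs⟩ := hs ξ
  obtain ⟨K', hK', hKs'⟩ := hs.fderiv ξ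
  obtain ⟨ε, hε, hb⟩ := Metric.eventually_nhds_iff_ball.1 hKs'
  obtain ⟨C, hC⟩ := (hK'.prod (isCompact_closedBall ξ ε)).exists_bound_of_continuousOn
    hd.continuousOn
  refine hasFDerivAt_integral_of_dominated_of_fderiv_le (𝕜 := ℝ) (s := Metric.ball ξ ε)
    (bound := K'.indicator fun _ => C) (F' := fun ξ w => fderiv ℝ (fun ξ => f ξ w) ξ)
    (Metric.ball_mem_nhds _ hε) ?_ ?_ ?_ ?_ ?_ ?_
  · exact .of_forall fun η => (contDiff_slice_right hf η).continuous.aestronglyMeasurable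
  · exact (contDiff_slice_right hf ξ).continuous.integrable_of_hasCompactSupport
      (HasCompactSupport.intro hK hKs.self_of_nhds)
  · exact (hd.comp (by fun_prop : Continuous fun w : W => (w, ξ))).aestronglyMeasurable
  · refine .of_forall fun w η hη => ?_
    by_cases hw : w ∈ K'
    · rw [Set.indicator_of_mem hw]
      exact hC (w, η) ⟨hw, Metric.ball_subset_closedBall hη⟩
    · have := hb η hη w hw
      simp only at this
      rw [Set.indicator_of_notMem hw, this, norm_zero]
  · rw [integrable_indicator_iff hK'.measurableSet]
    exact integrableOn_const hK'.measure_lt_top.ne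
  · refine .of_forall fun w η hη => ?_
    exact ((contDiff_slice_left hf w).differentiable (by simp)).differentiableAt.hasFDerivAt

lemma iter_int [ProperSpace X] (μ : Measure W) [IsFiniteMeasureOnCompacts μ] (γ : ℕ)
    {E : Type} [NormedAddCommGroup E] [NormedSpace ℝ E]
    {f : X → W → E} (hf : ContDiff ℝ ∞ (fun p : X × W => f p.1 p.2)) (hs : LocSupp f) (x : X)
    {h : W → ℝ} (hi : Integrable h μ)
    (hh : ∀ w, ‖iteratedFDeriv ℝ γ (fun x => f x w) x‖ ≤ h w) :
    ‖iteratedFDeriv ℝ γ (fun x => ∫ w, f x w ∂μ) x‖ ≤ ∫ w, h w ∂μ := by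
  induction γ generalizing E with
  | zero =>
    simp only [norm_iteratedFDeriv_zero] at hh ⊢
    exact norm_integral_le_of_norm_le hi (.of_forall hh)
  | succ γ ih =>
    rw [← norm_iteratedFDeriv_fderiv, funext (fderiv_int μ hf hs)]
    refine ih ?_ hs.fderiv fun w => ?_
    · have hf' : ContDiff ℝ ∞ (fun p : W × X => f p.2 p.1) :=
        hf.comp (f := fun p : W × X => (p.2, p.1)) (by fun_prop)
      exact (contDiff_fderiv_snd (f := fun w ξ => f ξ w) hf').comp
        (f := fun p : X × W => (p.2, p.1)) (by fun_prop)
    · have := norm_iteratedFDeriv_fderiv (𝕜 := ℝ) (f := fun x => f x w) (x := x) (n := γ)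
      exact this.trans_le (hh w)

lemma nest_int [ProperSpace X] [ProperSpace V] (μ : Measure W) [IsFiniteMeasureOnCompacts μ]
    (γ α : ℕ) {E : Type} [NormedAddCommGroup E] [NormedSpace ℝ E]
    {f : X → V → W → E} (hf : ContDiff ℝ ∞ (fun p : X × V × W => f p.1 p.2.1 p.2.2))
    (hs : ∀ ξ₀ : V, ∃ K : Set W, IsCompact K ∧ ∀ᶠ ξ in 𝓝 ξ₀, ∀ x, ∀ w ∉ K, f x ξ w = 0)
    (x : X) (ξ : V) {h : W → ℝ} (hi : Integrable h μ)
    (hh : ∀ w, ‖nest γ α (fun x ξ => f x ξ w) x ξ‖ ≤ h w) :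
    ‖nest γ α (fun x ξ => ∫ w, f x ξ w ∂μ) x ξ‖ ≤ ∫ w, h w ∂μ := by
  induction α generalizing E with
  | zero =>
    simp only [nest_zero] at hh ⊢
    refine iter_int μ γ (f := fun x w => f x ξ w) ?_ ?_ x hi hh
    · exact hf.comp (f := fun p : X × W => (p.1, ξ, p.2)) (by fun_prop)
    · intro x₀
      obtain ⟨K, hK, h⟩ := hs ξ
      exact ⟨K, hK, .of_forall h.self_of_nhds⟩
  | succ α ih =>
    rw [nest_succ]
    have e : (fun x ξ => fderiv ℝ (fun ξ => ∫ w, f x ξ w ∂μ) ξ) =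
        fun x ξ => ∫ w, fderiv ℝ (fun ξ => f x ξ w) ξ ∂μ := by
      funext x ξ
      refine fderiv_int μ (f := f x) ?_ ?_ ξ
      · exact hf.comp (f := fun p : V × W => (x, p.1, p.2)) (by fun_prop)
      · intro ξ₀
        obtain ⟨K, hK, h⟩ := hs ξ₀
        exact ⟨K, hK, h.mono fun ξ h => h x⟩
    rw [e]
    refine ih ?_ ?_ fun w => ?_
    · have hf' : ContDiff ℝ ∞ (fun p : (X × W) × V => f p.1.1 p.2 p.1.2) :=
        hf.comp (f := fun p : (X × W) × V => (p.1.1, p.2, p.1.2)) (by fun_prop)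
      exact (contDiff_fderiv_snd (f := fun (q : X × W) ξ => f q.1 ξ q.2) hf').comp
        (f := fun p : X × V × W => ((p.1, p.2.2), p.2.1)) (by fun_prop)
    · intro ξ₀
      obtain ⟨K, hK, h⟩ := hs ξ₀
      refine ⟨K, hK, h.eventually_nhds.mono fun ξ hξ x w hw => ?_⟩
      have : (fun ξ => f x ξ w) =ᶠ[𝓝 ξ] fun _ => 0 := hξ.mono fun y hy => hy x w hw
      simpa using this.fderiv_eq (𝕜 := ℝ)
    · rw [← nest_succ γ α (fun x ξ => f x ξ w)]
      exact hh w

end nested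

section japlemmas

variable {d e : ℕ}

local notation "𝔼" d => EuclideanSpace ℝ (Fin d)

lemma jap_sq (v : 𝔼 d) : jap v ^ 2 = 1 + ‖v‖ ^ 2 := Real.sq_sqrt (by positivity)

lemma one_le_jap (v : 𝔼 d) : 1 ≤ jap v := by
  rw [jap]
  exact Real.one_le_sqrt.2 (by nlinarith [sq_nonneg ‖v‖])

lemma jap_pos (v : 𝔼 d) : 0 < jap v := lt_of_lt_of_le one_pos (one_le_jap v)

lemma norm_le_jap (v : 𝔼 d) : ‖v‖ ≤ jap v :=
  Real.le_sqrt_of_sq_le (by linarith)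

lemma jap_rpow (v : 𝔼 d) (r : ℝ) : jap v ^ r = (1 + ‖v‖ ^ 2) ^ (r / 2) := by
  rw [← jap_sq, ← Real.rpow_natCast, ← Real.rpow_mul (jap_pos v).le]
  congr 1
  push_cast
  ring

lemma contDiff_jap_rpow (r : ℝ) : ContDiff ℝ ∞ (fun v : 𝔼 d => jap v ^ r) := by
  simp_rw [jap_rpow]
  refine ContDiff.rpow_const_of_ne (contDiff_const.add (contDiff_norm_sq ℝ)) fun v => by positivity

lemma quad_bound (c : ℝ) (hc : 0 ≤ c) (v : 𝔼 d) (D : ℝ) (hD : 0 ≤ D) (h1 : 2 * c * ‖v‖ ≤ D)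
    (h2 : 2 * c ≤ D ^ 2) (i : ℕ) (hi : 1 ≤ i) :
    ‖iteratedFDeriv ℝ i (fun w : 𝔼 d => c * (1 + ‖w‖ ^ 2)) v‖ ≤ D ^ i := by
  obtain ⟨I, hI, hIn⟩ : ∃ I : (𝔼 d) →L[ℝ] (𝔼 d) →L[ℝ] ℝ,
      (∀ x y, I x y = inner ℝ x y) ∧ ‖I‖ ≤ 1 :=
    ⟨innerSL ℝ, fun x y => rfl, norm_innerSL_le ℝ⟩
  have e : fderiv ℝ (fun w : 𝔼 d => c * (1 + ‖w‖ ^ 2)) =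
      ((2 * c) • I) := by
    funext w
    have h := (((hasStrictFDerivAt_norm_sq w).hasFDerivAt).const_add 1).const_mul c
    rw [h.fderiv]
    ext z
    simp [hI]
    ring
  obtain ⟨j, rfl⟩ : ∃ j, i = j + 1 := ⟨i - 1, by omega⟩
  rw [← norm_iteratedFDeriv_fderiv, e]
  have nb : ‖((2 * c) • I)‖ ≤ 2 * c := by
    refine (ContinuousLinearMap.opNorm_smul_le _ _).trans ?_
    rw [Real.norm_of_nonneg (by positivity)]
    exact mul_le_of_le_one_right (by positivity) hIn
  rcases j with _ | j
  · rw [norm_iteratedFDeriv_zero, zero_add, pow_one]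
    refine le_trans ?_ h1
    exact (ContinuousLinearMap.le_opNorm _ _).trans (by gcongr)
  · rw [← norm_iteratedFDeriv_fderiv]
    have e2 : fderiv ℝ ((2 * c) • I) =
        fun _ => ((2 * c) • I) := by
      funext w
      exact ContinuousLinearMap.fderiv _
    rw [e2]
    rcases j with _ | j
    · rw [norm_iteratedFDeriv_zero]
      exact nb.trans h2
    · rw [iteratedFDeriv_succ_const]
      simp
      positivity

lemma jap_rpow_bound (d : ℕ) (r : ℝ) (i : ℕ) : ∃ C : ℝ, 0 ≤ C ∧ ∀ v : 𝔼 d,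
    ‖iteratedFDeriv ℝ i (fun w : 𝔼 d => jap w ^ r) v‖ ≤ C * jap v ^ r * (jap v)⁻¹ ^ i := by
  set k : ℝ → ℝ := fun u => u ^ (r / 2) with hk
  set C := ∑ j ∈ Finset.range (i + 1), ‖iteratedFDerivWithin ℝ j k (Set.Ioi 0) 1‖ with hC
  have hC0 : 0 ≤ C := Finset.sum_nonneg fun _ _ => norm_nonneg _
  refine ⟨(i.factorial : ℝ) * C * 2 ^ i, by positivity, fun v => ?_⟩
  have hp := jap_pos v
  have hq : ContDiff ℝ ∞ (fun w : 𝔼 d => (jap v ^ 2)⁻¹ * (1 + ‖w‖ ^ 2)) :=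
    contDiff_const.mul (contDiff_const.add (contDiff_norm_sq ℝ))
  have hkc : ContDiffOn ℝ ∞ k (Set.Ioi 0) := fun u hu =>
    (Real.contDiffAt_rpow_const_of_ne (ne_of_gt hu)).contDiffWithinAt
  have hr : Set.range (fun w : 𝔼 d => (jap v ^ 2)⁻¹ * (1 + ‖w‖ ^ 2)) ⊆ Set.Ioi 0 := by
    rintro _ ⟨w, rfl⟩
    show (0 : ℝ) < _
    positivity
  have hone : (jap v ^ 2)⁻¹ * (1 + ‖v‖ ^ 2) = 1 := by
    rw [← jap_sq]; exact inv_mul_cancel₀ (by positivity)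
  have main := norm_iteratedFDeriv_comp_le' (n := i) hr (isOpen_Ioi.uniqueDiffOn) hkc hq
    (by exact_mod_cast le_top) v (C := C) (D := 2 * (jap v)⁻¹) (fun j hj => by
      simp only [hone]
      exact Finset.single_le_sum (f := fun j => ‖iteratedFDerivWithin ℝ j k (Set.Ioi 0) 1‖)
        (fun _ _ => norm_nonneg _) (Finset.mem_range.2 (by omega)))
    (fun j hj _ => by
      refine quad_bound _ (by positivity) v _ (by positivity) ?_ ?_ j hj
      · have := norm_le_jap v
        calc _ ≤ 2 * (jap v ^ 2)⁻¹ * jap v := by gcongr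
          _ = _ := by field_simp
      · rw [mul_pow, inv_pow]
        have : 0 ≤ (jap v ^ 2)⁻¹ := by positivity
        linarith)
  have e : (fun w : 𝔼 d => jap w ^ r) = (jap v ^ r) •
      (k ∘ fun w : 𝔼 d => (jap v ^ 2)⁻¹ * (1 + ‖w‖ ^ 2)) := by
    funext w
    simp only [Pi.smul_apply, Function.comp, hk, smul_eq_mul]
    rw [Real.mul_rpow (by positivity) (by positivity), jap_rpow w, jap_rpow v, ← jap_sq v,
      Real.inv_rpow (by positivity)]
    have : (jap v ^ 2) ^ (r / 2) ≠ 0 := by positivity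
    field_simp
  have hkq : ContDiff ℝ ∞ (k ∘ fun w : 𝔼 d => (jap v ^ 2)⁻¹ * (1 + ‖w‖ ^ 2)) :=
    hkc.comp_contDiff hq fun w => hr ⟨w, rfl⟩
  rw [e, iteratedFDeriv_const_smul_apply (hkq.of_le (by exact_mod_cast le_top)).contDiffAt,
    norm_smul, Real.norm_of_nonneg (by positivity)]
  calc _ ≤ jap v ^ r * (i.factorial * C * (2 * (jap v)⁻¹) ^ i) := by gcongr
    _ = _ := by rw [mul_pow]; ring

lemma cutoff_bound {Ψ : (𝔼 e) → ℂ} (hΨ : ContDiff ℝ ∞ Ψ) (hs : HasCompactSupport Ψ)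
    (R : ℝ) (hR : 0 ≤ R) (d k : ℕ) : ∃ C : ℝ, 0 ≤ C ∧ ∀ (v : 𝔼 d) (w : 𝔼 e),
    ‖w‖ ≤ R * jap v ^ (1 / 2 : ℝ) →
    ‖iteratedFDeriv ℝ k (fun v : 𝔼 d => Ψ (jap v ^ (-(1 / 2) : ℝ) • w)) v‖ ≤
      C * (jap v)⁻¹ ^ k := by
  have hb : ∀ i : ℕ, ∃ C : ℝ, ∀ z, ‖iteratedFDeriv ℝ i Ψ z‖ ≤ C := fun i =>
    (hs.iteratedFDeriv i).exists_bound_of_continuous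
      (hΨ.continuous_iteratedFDeriv (by exact_mod_cast le_top))
  choose B hB using hb
  choose c hc0 hc using jap_rpow_bound d (-(1 / 2) : ℝ)
  have hB0 : ∀ i, 0 ≤ B i := fun i => (norm_nonneg _).trans (hB i 0)
  set BB := ∑ j ∈ Finset.range (k + 1), B j
  set A := 1 + ∑ j ∈ Finset.range (k + 1), R * c j with hA
  have hBB : 0 ≤ BB := Finset.sum_nonneg fun _ _ => hB0 _
  have hA1 : 1 ≤ A := by
    have : 0 ≤ ∑ j ∈ Finset.range (k + 1), R * c j :=
      Finset.sum_nonneg fun j _ => mul_nonneg hR (hc0 j)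
    linarith
  refine ⟨k.factorial * BB * A ^ k, by positivity, fun v w hw => ?_⟩
  have hp := jap_pos v
  have hsm : ContDiff ℝ ∞ (fun v : 𝔼 d => jap v ^ (-(1 / 2) : ℝ) • w) :=
    (contDiff_jap_rpow _).smul contDiff_const
  have main := norm_iteratedFDeriv_comp_le (n := k) hΨ hsm
    (by exact_mod_cast le_top) v (C := BB) (D := A * (jap v)⁻¹) (fun j hj =>
      (hB j _).trans (Finset.single_le_sum (fun j _ => hB0 j) (Finset.mem_range.2 (by omega))))
    (fun j hj hjk => by
      have e1 : (fun v : 𝔼 d => jap v ^ (-(1 / 2) : ℝ) • w) =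
          (ContinuousLinearMap.toSpanSingleton ℝ w) ∘ fun v : 𝔼 d => jap v ^ (-(1 / 2) : ℝ) := by
        funext v; simp
      rw [e1]
      refine (ContinuousLinearMap.norm_iteratedFDeriv_comp_left _ (N := ∞)
        (contDiff_jap_rpow _).contDiffAt (by exact_mod_cast le_top)).trans ?_
      rw [ContinuousLinearMap.norm_toSpanSingleton]
      have hcj := hc j v
      have hcA : R * c j ≤ A ^ j := by
        have h1 : R * c j ≤ A := by
          have := Finset.single_le_sum (f := fun j => R * c j)
            (fun j _ => mul_nonneg hR (hc0 j)) (Finset.mem_range.2 (by omega : j < k + 1))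
          linarith
        exact h1.trans (le_self_pow₀ hA1 (by omega))
      have hone : jap v ^ (1 / 2 : ℝ) * jap v ^ (-(1 / 2) : ℝ) = 1 := by
        rw [← Real.rpow_add hp]; simp
      calc _ ≤ (R * jap v ^ (1 / 2 : ℝ)) * (c j * jap v ^ (-(1 / 2) : ℝ) * (jap v)⁻¹ ^ j) := by
            gcongr
        _ = (jap v ^ (1 / 2 : ℝ) * jap v ^ (-(1 / 2) : ℝ)) * (R * c j * (jap v)⁻¹ ^ j) := by ring
        _ ≤ A ^ j * (jap v)⁻¹ ^ j := by rw [hone, one_mul]; gcongr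
        _ = _ := by rw [mul_pow])
  refine main.trans_eq ?_
  rw [mul_pow]; ring

lemma jap2_rpow_le (R : ℝ) (M : ℝ) (v : 𝔼 d) (w : 𝔼 e)
    (hw : ‖w‖ ≤ R * jap v ^ (1 / 2 : ℝ)) :
    jap2 v w ^ M ≤ Real.sqrt (1 + R ^ 2) ^ |M| * jap v ^ M := by
  have hp := jap_pos v
  have h1 : jap v ≤ jap2 v w := Real.sqrt_le_sqrt (by nlinarith [sq_nonneg ‖w‖])
  have hc : 1 ≤ Real.sqrt (1 + R ^ 2) := Real.one_le_sqrt.2 (by nlinarith [sq_nonneg R])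
  have h2 : jap2 v w ≤ Real.sqrt (1 + R ^ 2) * jap v := by
    rw [jap, ← Real.sqrt_mul (by positivity)]
    apply Real.sqrt_le_sqrt
    rw [← jap_sq]
    have hs : (jap v ^ (1 / 2 : ℝ)) ^ 2 = jap v := by
      rw [← Real.rpow_natCast, ← Real.rpow_mul hp.le]; norm_num
    have : ‖w‖ ^ 2 ≤ R ^ 2 * jap v := by
      calc _ ≤ (R * jap v ^ (1 / 2 : ℝ)) ^ 2 := by gcongr
        _ = _ := by rw [mul_pow, hs]
    have h3 : jap v ≤ jap v ^ 2 := by nlinarith [one_le_jap v]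
    nlinarith [mul_le_mul_of_nonneg_left h3 (sq_nonneg R)]
  rcases le_total 0 M with hM | hM
  · rw [abs_of_nonneg hM, ← Real.mul_rpow (by positivity) hp.le]
    exact Real.rpow_le_rpow (hp.le.trans h1) h2 hM
  · refine (Real.rpow_le_rpow_of_nonpos hp h1 hM).trans ?_
    exact le_mul_of_one_le_left (by positivity) (Real.one_le_rpow hc (abs_nonneg M))

lemma integrable_jap (M : ℝ) (hM : M < -(e : ℝ)) :
    Integrable (fun w : 𝔼 e => jap w ^ M) := by
  simp_rw [jap_rpow]
  have := integrable_rpow_neg_one_add_norm_sq (E := 𝔼 e) (μ := volume) (r := -M)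
    (by simp; linarith)
  simpa using this

end japlemmas

set_option maxHeartbeats 1000000 in
/-- Parabolic decomposition (case `M₂ < −d₂`): integrating a symbol-valued symbol of
order `(M₁,M₂)` over `ξ″` against a cutoff supported where `|ξ″| ≲ ⟨ξ′⟩^{1/2}`
produces a type-`(1/2,1/2)` symbol of order `M₁` in `ξ′`. -/
theorem stmt15 (n d₁ d₂ : ℕ) (hn : 1 ≤ n) (hd₁ : 1 ≤ d₁) (hd₂ : 1 ≤ d₂)
    (M₁ M₂ : ℝ) (hM₂ : M₂ < -(d₂ : ℝ))
    (a : EuclideanSpace ℝ (Fin n) → EuclideanSpace ℝ (Fin d₁) →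
      EuclideanSpace ℝ (Fin d₂) → ℂ)
    (ha_smooth : ContDiff ℝ (⊤ : ℕ∞)
      (fun p : EuclideanSpace ℝ (Fin n) × EuclideanSpace ℝ (Fin d₁) ×
          EuclideanSpace ℝ (Fin d₂) => a p.1 p.2.1 p.2.2))
    (ha : ∀ γ α β : ℕ, ∃ C : ℝ, ∀ x ξ' ξ'',
      ‖iteratedFDeriv ℝ γ (fun x => iteratedFDeriv ℝ α (fun ξ' =>
          iteratedFDeriv ℝ β (fun ξ'' => a x ξ' ξ'') ξ'') ξ') x‖ ≤
        C * jap2 ξ' ξ'' ^ (M₁ - (α : ℝ)) * jap ξ'' ^ (M₂ - (β : ℝ)))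
    (ψ : EuclideanSpace ℝ (Fin d₂) → ℝ)
    (hψ_smooth : ContDiff ℝ (⊤ : ℕ∞) ψ) (hψ_supp : HasCompactSupport ψ) :
    ∀ γ α : ℕ, ∃ C' : ℝ, ∀ x ξ',
      ‖iteratedFDeriv ℝ γ (fun x => iteratedFDeriv ℝ α (fun ξ' =>
          ∫ ξ'' : EuclideanSpace ℝ (Fin d₂),
            a x ξ' ξ'' * (ψ ((jap ξ' ^ (-(1 / 2) : ℝ)) • ξ'') : ℂ)) ξ') x‖ ≤
        C' * jap ξ' ^ (M₁ - (α : ℝ) / 2) := by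
  intro γ α
  set Ψ : EuclideanSpace ℝ (Fin d₂) → ℂ := fun w => (ψ w : ℂ) with hΨd
  have hΨ : ContDiff ℝ ∞ Ψ := Complex.ofRealCLM.contDiff.comp hψ_smooth
  have hΨs : HasCompactSupport Ψ := hψ_supp.comp_left (g := fun r : ℝ => (r : ℂ)) (by simp)
  obtain ⟨R, hR0, hR⟩ : ∃ R : ℝ, 0 ≤ R ∧ ∀ w, R < ‖w‖ → Ψ w = 0 := by
    obtain ⟨R, hR⟩ := hΨs.isCompact.isBounded.subset_closedBall 0
    refine ⟨max R 0, le_max_right _ _, fun w hw => ?_⟩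
    by_contra hne
    have := hR (subset_tsupport _ hne)
    rw [mem_closedBall_zero_iff] at this
    exact absurd hw (not_lt.2 (this.trans (le_max_left _ _)))
  have hvan : ∀ (v : EuclideanSpace ℝ (Fin d₁)) (w : EuclideanSpace ℝ (Fin d₂)),
      R * jap v ^ (1 / 2 : ℝ) < ‖w‖ → Ψ (jap v ^ (-(1 / 2) : ℝ) • w) = 0 := by
    intro v w h
    have hp := jap_pos v
    apply hR
    rw [norm_smul, Real.norm_of_nonneg (by positivity)]
    have hone : jap v ^ (-(1 / 2) : ℝ) * jap v ^ (1 / 2 : ℝ) = 1 := by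
      rw [← Real.rpow_add hp]; simp
    calc R = jap v ^ (-(1 / 2) : ℝ) * (R * jap v ^ (1 / 2 : ℝ)) := by
          rw [mul_left_comm, hone, mul_one]
      _ < _ := by gcongr
  have hcont : Continuous fun v : EuclideanSpace ℝ (Fin d₁) => jap v ^ (1 / 2 : ℝ) :=
    (contDiff_jap_rpow _).continuous
  choose Cg hCg0 hCg using cutoff_bound hΨ hΨs R hR0 d₁
  -- symbol bounds for `a`
  have haw : ∀ w, ContDiff ℝ ∞ (fun p : EuclideanSpace ℝ (Fin n) × EuclideanSpace ℝ (Fin d₁) =>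
      a p.1 p.2 w) := fun w => ha_smooth.comp
    (f := fun p : EuclideanSpace ℝ (Fin n) × EuclideanSpace ℝ (Fin d₁) => (p.1, p.2, w))
    (by fun_prop)
  have ha' : ∀ i : ℕ, ∃ C : ℝ, 0 ≤ C ∧ ∀ x v w, ‖w‖ ≤ R * jap v ^ (1 / 2 : ℝ) →
      ‖nest γ i (fun x v => a x v w) x v‖ ≤ C * (jap v ^ M₁ * jap w ^ M₂) * (jap v)⁻¹ ^ i := by
    intro i
    obtain ⟨C, hC⟩ := ha γ i 0
    refine ⟨|C| * Real.sqrt (1 + R ^ 2) ^ |M₁ - i|, by positivity, fun x v w hw => ?_⟩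
    have hp := jap_pos v
    have hpw := jap_pos w
    set T := continuousMultilinearCurryFin0 ℝ (EuclideanSpace ℝ (Fin d₂)) ℂ
    obtain ⟨T', hT, hT'⟩ : ∃ T' : ContinuousMultilinearMap ℝ
        (fun _ : Fin 0 => EuclideanSpace ℝ (Fin d₂)) ℂ →L[ℝ] ℂ,
        ‖T'‖ ≤ 1 ∧ ∀ z, T' (T.symm z) = z :=
      ⟨T.toLinearIsometry.toContinuousLinearMap, T.toLinearIsometry.norm_toContinuousLinearMap_le,
        fun z => T.apply_symm_apply z⟩
    have h1 := nest_clm γ i T'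
      (f := fun x v => T.symm (a x v w)) (T.symm.contDiff.comp (haw w)) x v
    have h2 : ‖nest γ i (fun x v => T.symm (a x v w)) x v‖ ≤
      C * jap2 v w ^ (M₁ - (i : ℝ)) * jap w ^ (M₂ - ((0 : ℕ) : ℝ)) := hC x v w
    have h3 : ‖nest γ i (fun x v => a x v w) x v‖ ≤
        ‖nest γ i (fun x v => T.symm (a x v w)) x v‖ := by
      refine le_trans (le_of_eq ?_) (h1.trans (mul_le_of_le_one_left (norm_nonneg _) hT))
      simp only [hT']
    refine h3.trans (h2.trans ?_)
    have h4 := jap2_rpow_le R (M₁ - i) v w hw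
    have h5 : jap v ^ (M₁ - (i : ℝ)) = jap v ^ M₁ * (jap v)⁻¹ ^ i := by
      rw [Real.rpow_sub hp, Real.rpow_natCast, inv_pow, div_eq_mul_inv]
    have h6 : 0 ≤ jap2 v w ^ (M₁ - (i : ℝ)) := Real.rpow_nonneg (Real.sqrt_nonneg _) _
    rw [h5] at h4
    rw [Nat.cast_zero, sub_zero]
    calc _ ≤ |C| * (Real.sqrt (1 + R ^ 2) ^ |M₁ - i| * (jap v ^ M₁ * (jap v)⁻¹ ^ i)) *
          jap w ^ M₂ := by
          gcongr
          exact le_abs_self C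
      _ = _ := by ring
  choose Ca hCa0 hCa using ha'
  have hsum : ∀ c : ℕ → ℝ, (∀ i, 0 ≤ c i) → ∃ S : ℝ, 0 ≤ S ∧ ∀ i ≤ α, c i ≤ S := fun c hc =>
    ⟨∑ i ∈ Finset.range (α + 1), c i, Finset.sum_nonneg fun i _ => hc i, fun i hi =>
      Finset.single_le_sum (fun j _ => hc j) (Finset.mem_range.2 (by omega))⟩
  obtain ⟨CA, hCA, hCAle⟩ := hsum Ca hCa0
  obtain ⟨CG, hCG, hCGle⟩ := hsum Cg hCg0
  set J := ∫ w : EuclideanSpace ℝ (Fin d₂), jap w ^ M₂ with hJ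
  have hJ0 : 0 ≤ J := integral_nonneg fun w => Real.rpow_nonneg (jap_pos w).le _
  refine ⟨2 ^ α * CA * CG * J, fun x v => ?_⟩
  have hp := jap_pos v
  have key := nest_int (volume : Measure (EuclideanSpace ℝ (Fin d₂))) γ α
    (f := fun (x : EuclideanSpace ℝ (Fin n)) (v : EuclideanSpace ℝ (Fin d₁))
      (w : EuclideanSpace ℝ (Fin d₂)) => a x v w * Ψ (jap v ^ (-(1 / 2) : ℝ) • w)) ?_ ?_ x v
    (h := fun w => (2 ^ α * CA * CG * (jap v ^ M₁ * (jap v)⁻¹ ^ α)) * jap w ^ M₂)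
    ((integrable_jap M₂ hM₂).const_mul _) ?_
  · rw [integral_const_mul, ← hJ] at key
    clear_value J
    refine key.trans ?_
    have h7 : jap v ^ M₁ * (jap v)⁻¹ ^ α ≤ jap v ^ (M₁ - (α : ℝ) / 2) := by
      have : jap v ^ M₁ * (jap v)⁻¹ ^ α = jap v ^ (M₁ - (α : ℝ)) := by
        rw [Real.rpow_sub hp, Real.rpow_natCast, inv_pow, div_eq_mul_inv]
      rw [this]
      have hα : (0 : ℝ) ≤ α := Nat.cast_nonneg _
      exact Real.rpow_le_rpow_of_exponent_le (one_le_jap v) (by linarith)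
    have h8 := mul_le_mul_of_nonneg_left h7 (show 0 ≤ 2 ^ α * CA * CG * J by positivity)
    refine le_trans (le_of_eq ?_) h8
    ring
  · refine ContDiff.mul ha_smooth (hΨ.comp ?_)
    exact ((contDiff_jap_rpow _).comp (contDiff_fst.comp contDiff_snd)).smul
      (contDiff_snd.comp contDiff_snd)
  · intro v₀
    refine ⟨Metric.closedBall 0 (R * (jap v₀ ^ (1 / 2 : ℝ) + 1)), isCompact_closedBall _ _, ?_⟩
    have : ∀ᶠ v in 𝓝 v₀, jap v ^ (1 / 2 : ℝ) < jap v₀ ^ (1 / 2 : ℝ) + 1 :=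
      hcont.continuousAt.eventually_lt_const (by linarith)
    filter_upwards [this] with v hv x w hw
    rw [mem_closedBall_zero_iff, not_le] at hw
    rw [hvan v w (lt_of_le_of_lt (by gcongr) hw), mul_zero]
  · intro w
    have hpw := jap_pos w
    by_cases hw : ‖w‖ ≤ R * jap v ^ (1 / 2 : ℝ)
    · have hb := nest_bilin γ α (ContinuousLinearMap.mul ℝ ℂ) (a := fun x v => a x v w)
        (g := fun v => Ψ (jap v ^ (-(1 / 2) : ℝ) • w)) (haw w)
        (hΨ.comp ((contDiff_jap_rpow _).smul contDiff_const)) x v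
        (A := CA * (jap v ^ M₁ * jap w ^ M₂)) (B := CG) (t := (jap v)⁻¹)
        (by positivity) hCG (by positivity) (fun i hi => by
          refine (hCa i x v w hw).trans ?_
          gcongr
          exact hCAle i hi)
        (fun i hi => by
          refine (hCg i v w hw).trans ?_
          gcongr
          exact hCGle i hi)
      refine hb.trans ?_
      have hm : ‖ContinuousLinearMap.mul ℝ ℂ‖ ≤ 1 := ContinuousLinearMap.opNorm_mul_le ℝ ℂ
      calc _ ≤ 1 * 2 ^ α * (CA * (jap v ^ M₁ * jap w ^ M₂) * CG * (jap v)⁻¹ ^ α) := by gcongr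
        _ = _ := by ring
    · rw [not_le] at hw
      have hev : ∀ᶠ v' in 𝓝 v, R * jap v' ^ (1 / 2 : ℝ) < ‖w‖ :=
        (continuous_const.mul hcont).continuousAt.eventually_lt_const hw
      have hz : nest γ α (fun x v => a x v w * Ψ (jap v ^ (-(1 / 2) : ℝ) • w)) x v = 0 := by
        unfold nest
        have : (fun x => iteratedFDeriv ℝ α
            (fun v => a x v w * Ψ (jap v ^ (-(1 / 2) : ℝ) • w)) v) = fun _ => 0 := by
          funext x
          have h0 : (fun v => a x v w * Ψ (jap v ^ (-(1 / 2) : ℝ) • w)) =ᶠ[𝓝 v] fun _ => 0 :=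
            hev.mono fun v' hv' => by simp only [hvan v' w hv', mul_zero]
          rw [(h0.iteratedFDeriv ℝ α).self_of_nhds]
          simp
        rw [this]
        simp
      rw [hz, norm_zero]
      positivity
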